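/- Let u: F_m → F_n and v: F_n → F_m be injective homomorphisms of finitely generated free groups (each with a fixed basis). Then u restricts to an isomorphism from fix(v ∘ u) onto fix(u ∘ v), and a(v ∘ u) = a(u ∘ v). -/

import Mathlib

/-!
The statement on fixed subgroups is formal: `u` maps `fix(v ∘ u)` into `fix(u ∘ v)`, and `v` sends
`h ∈ fix(u ∘ v)` to a preimage of it in `fix(v ∘ u)`.

For the attracting fixed words, `u` and `v` are extended to infinite words. Write `(g | h)` for
`|g ∧ h|`, which is the Gromov product in the Cayley tree (`norm_inv_mul`). An injective
homomorphism `u` is Lipschitz, and it is proper since balls are finite (`exists_proper`). As the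
Cayley graph is a tree, a path that moves in steps of length at most `L` comes within `L` of every
vertex separating its endpoints (`exists_near`). Together these give bounded cancellation
(`exists_bounded_cancellation`), so `u` sends words with long common prefixes to words with long
common prefixes and has a unique continuous extension to infinite words (`Extends.exists_limit`,
`bdry_unique`).

If `W` is an attracting fixed word of `v ∘ u`, then `u(W)` is one of `u ∘ v`: fixedness is formal,
and the growth condition follows from bounded cancellation and properness
(`isAttractingFixedWord_image`). Since `v(u(W)) = W` when `W` is fixed, the maps induced by `u` and
`v` on attracting fixed words are mutually inverse, and both respect equivalence because
`u(U W) = u(U) u(W)` (`equivFixedWords_image`). So they induce a bijection of equivalence classes.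
-/


open Filter

namespace ZZFix

/-- A letter: a basis element together with a sign. -/
abbrev Letter (α : Type*) := α × Bool

/-- The inverse letter. -/
def linv {α : Type*} (l : Letter α) : Letter α := (l.1, !l.2)

/-- An infinite reduced word: a sequence of letters with no adjacent cancellation. -/
def InfWord (α : Type*) : Type _ := {w : ℕ → Letter α // ∀ i, w (i + 1) ≠ linv (w i)}

/-- The length-`i` prefix of an infinite reduced word, as a list of letters. -/
def prefixList {α : Type*} (W : InfWord α) (i : ℕ) : List (Letter α) :=
  (List.range i).map W.1

/-- The length-`i` prefix of an infinite reduced word, as an element of the free group. -/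
def wordPrefix {α : Type*} (W : InfWord α) (i : ℕ) : FreeGroup α :=
  FreeGroup.mk (prefixList W i)

/-- Length of the longest common prefix of two lists. -/
def commonPrefixLength {β : Type*} [DecidableEq β] : List β → List β → ℕ
  | a :: as, b :: bs => if a = b then commonPrefixLength as bs + 1 else 0
  | _, _ => 0

variable {α : Type*} [DecidableEq α]

/-- `|W ∧ g|` for an infinite reduced word `W` and a finite reduced word `g`. -/
def wedgeF (W : InfWord α) (g : FreeGroup α) : ℕ :=
  commonPrefixLength (prefixList W (FreeGroup.toWord g).length) (FreeGroup.toWord g)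

/-- `|g ∧ h|` for finite reduced words. -/
def wedgeFF (g h : FreeGroup α) : ℕ :=
  commonPrefixLength (FreeGroup.toWord g) (FreeGroup.toWord h)

/-- `|W ∧ V|` for infinite reduced words, valued in `ℕ∞` (it is `⊤` iff `W = V`). -/
noncomputable def wedgeI {α : Type*} (W V : InfWord α) : ℕ∞ :=
  sSup ((fun i : ℕ => (i : ℕ∞)) '' {i : ℕ | prefixList W i = prefixList V i})

/-- A sequence of group elements converges to the infinite reduced word `W`
(in the initial segment metric on `F ⊔ ∂F`). -/
def ConvergesTo (u : ℕ → FreeGroup α) (W : InfWord α) : Prop :=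
  Tendsto (fun i => wedgeF W (u i)) atTop atTop

/-- `W` is a fixed infinite word of `φ`: `|W ∧ φ(W_i)| → ∞`. -/
def IsFixedInfWord (φ : FreeGroup α →* FreeGroup α) (W : InfWord α) : Prop :=
  Tendsto (fun i => wedgeF W (φ (wordPrefix W i))) atTop atTop

/-- `W` is an attracting fixed word of `φ`: it is fixed and `|W ∧ φ(W_i)| - i → +∞`. -/
def IsAttractingFixedWord (φ : FreeGroup α →* FreeGroup α) (W : InfWord α) : Prop :=
  IsFixedInfWord φ W ∧
    Tendsto (fun i => (wedgeF W (φ (wordPrefix W i)) : ℤ) - (i : ℤ)) atTop atTop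

/-- The fixed subgroup of an endomorphism. -/
def fixedSubgroup {G : Type*} [Group G] (φ : G →* G) : Subgroup G where
  carrier := {g | φ g = g}
  one_mem' := map_one φ
  mul_mem' := by
    intro a b ha hb
    simp only [Set.mem_setOf_eq] at *
    rw [map_mul, ha, hb]
  inv_mem' := by
    intro a ha
    simp only [Set.mem_setOf_eq] at *
    rw [map_inv, ha]

/-- The rank (minimal number of generators) of a subgroup, valued in `ℕ∞`. -/
noncomputable def grpRank {G : Type*} [Group G] (H : Subgroup G) : ℕ∞ :=
  sInf {k : ℕ∞ | ∃ S : Finset G, Subgroup.closure (S : Set G) = H ∧ (S.card : ℕ∞) = k}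

/-- Two infinite reduced words are equivalent (w.r.t. `φ`) if `W' = U·W` for some
`U ∈ fix(φ)`, i.e. the reduced products `U·W_i` converge to `W'`. -/
def EquivFixedWords (φ : FreeGroup α →* FreeGroup α) (W W' : InfWord α) : Prop :=
  ∃ U ∈ fixedSubgroup φ, ConvergesTo (fun i => U * wordPrefix W i) W'

/-- `a(φ)`: the number of equivalence classes of attracting fixed words, in `ℕ∞`. -/
noncomputable def aCard (φ : FreeGroup α →* FreeGroup α) : ℕ∞ :=
  ENat.card (Quot fun (W W' : {W : InfWord α // IsAttractingFixedWord φ W}) =>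
    EquivFixedWords φ W.1 W'.1)

/-- The inner automorphism `i_c : g ↦ c g c⁻¹`, as a monoid homomorphism. -/
def innerAut {G : Type*} [Group G] (c : G) : G →* G := (MulAut.conj c).toMonoidHom

/-- Two endomorphisms are similar if `ψ₂ = i_c ∘ ψ₁ ∘ i_c⁻¹` for some `c`. -/
def Similar {G : Type*} [Group G] (ψ₁ ψ₂ : G →* G) : Prop :=
  ∃ c : G, ψ₂ = ((innerAut c).comp ψ₁).comp (innerAut c⁻¹)

/-- The trace of the endomorphism of `ℤⁿ` induced by `φ` on the abelianization. -/
def abTrace {n : ℕ} (φ : FreeGroup (Fin n) →* FreeGroup (Fin n)) : ℤ :=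
  ∑ i : Fin n, Multiplicative.toAdd
    ((FreeGroup.lift fun k => Multiplicative.ofAdd (if k = i then (1 : ℤ) else 0))
      (φ (FreeGroup.of i)))

/-- The constant infinite reduced word `l l l ⋯`. -/
def constWord {α : Type*} (l : Letter α) : InfWord α :=
  ⟨fun _ => l, fun _ h => by
    have h2 := congrArg Prod.snd h
    simp [linv] at h2⟩

/-- `W` is an attracting fixed point of `φ`: it is fixed, and there is `i₀` such that
every finite or infinite reduced word `V` with `|W ∧ V| ≥ i₀` satisfies
`|W ∧ φᵖ(V)| → ∞` as `p → ∞`. -/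
def IsAttractingFixedPoint (φ : FreeGroup α →* FreeGroup α) (W : InfWord α) : Prop :=
  IsFixedInfWord φ W ∧
    ∃ i₀ : ℕ,
      (∀ g : FreeGroup α, i₀ ≤ wedgeF W g →
        Tendsto (fun p => wedgeF W ((⇑φ)^[p] g)) atTop atTop) ∧
      (∀ V : InfWord α, (i₀ : ℕ∞) ≤ wedgeI W V →
        ∀ Vs : ℕ → InfWord α, Vs 0 = V →
          (∀ p, ConvergesTo (fun i => φ (wordPrefix (Vs p) i)) (Vs (p + 1))) →
          Tendsto (fun p => wedgeI W (Vs p)) atTop atTop)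

open scoped Classical in
/-- The initial segment metric. -/
noncomputable def distIS {α : Type*} (W V : InfWord α) : ℝ :=
  if W = V then 0 else 1 / (1 + ((wedgeI W V).toNat : ℝ))

set_option linter.unusedSectionVars false

/-! ### Common prefixes of reduced words -/

theorem le_commonPrefixLength_iff {β : Type*} [DecidableEq β] (n : ℕ) (a b : List β) :
    n ≤ commonPrefixLength a b ↔ n ≤ a.length ∧ n ≤ b.length ∧ a.take n = b.take n := by
  induction n generalizing a b with
  | zero => simp
  | succ n ih =>
    cases a with
    | nil => simp [commonPrefixLength]
    | cons x a =>
      cases b with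
      | nil => simp [commonPrefixLength]
      | cons y b =>
        by_cases h : x = y
        · simp [commonPrefixLength, h, ih]
        · simp [commonPrefixLength, h]

theorem le_wedgeFF_iff (n : ℕ) (g h : FreeGroup α) :
    n ≤ wedgeFF g h ↔ n ≤ g.norm ∧ n ≤ h.norm ∧ g.toWord.take n = h.toWord.take n :=
  le_commonPrefixLength_iff _ _ _

theorem wedgeFF_comm (g h : FreeGroup α) : wedgeFF g h = wedgeFF h g := by
  refine le_antisymm ?_ ?_
  · obtain ⟨h1, h2, h3⟩ := (le_wedgeFF_iff _ g h).1 le_rfl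
    exact (le_wedgeFF_iff _ _ _).2 ⟨h2, h1, h3.symm⟩
  · obtain ⟨h1, h2, h3⟩ := (le_wedgeFF_iff _ h g).1 le_rfl
    exact (le_wedgeFF_iff _ _ _).2 ⟨h2, h1, h3.symm⟩

theorem wedgeFF_le_left (g h : FreeGroup α) : wedgeFF g h ≤ g.norm :=
  ((le_wedgeFF_iff _ g h).1 le_rfl).1

theorem wedgeFF_le_right (g h : FreeGroup α) : wedgeFF g h ≤ h.norm :=
  ((le_wedgeFF_iff _ g h).1 le_rfl).2.1

theorem wedgeFF_ultra {n : ℕ} {g h k : FreeGroup α} (h1 : n ≤ wedgeFF g h)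
    (h2 : n ≤ wedgeFF h k) : n ≤ wedgeFF g k := by
  rw [le_wedgeFF_iff] at *
  exact ⟨h1.1, h2.2.1, h1.2.2.trans h2.2.2⟩

theorem norm_mk_of_isReduced {L : List (Letter α)} (h : FreeGroup.IsReduced L) :
    (FreeGroup.mk L).norm = L.length := by
  rw [FreeGroup.norm, FreeGroup.toWord_mk, h.reduce_eq]

/-- If two reduced words share no initial letter, the concatenation of the formal inverse of the
first with the second is reduced. -/
theorem isReduced_invRev_append {a b : List (Letter α)} (ha : FreeGroup.IsReduced a)
    (hb : FreeGroup.IsReduced b) (h : commonPrefixLength a b = 0) :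
    FreeGroup.IsReduced (FreeGroup.invRev a ++ b) := by
  have hia : FreeGroup.IsReduced (FreeGroup.invRev a) := by
    rw [FreeGroup.isReduced_iff_reduce_eq, FreeGroup.reduce_invRev, ha.reduce_eq]
  cases a with
  | nil => simpa using hb
  | cons x a =>
    cases b with
    | nil => simpa using hia
    | cons y b =>
      rw [FreeGroup.invRev_cons] at hia ⊢
      simp only [commonPrefixLength] at h
      have hxy : x ≠ y := by
        intro hxy
        simp [hxy] at h
      refine FreeGroup.IsReduced.append_overlap hia ?_ (by simp [FreeGroup.invRev])
      simp only [FreeGroup.invRev, List.map_cons, List.map_nil, List.reverse_cons,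
        List.reverse_nil, List.nil_append, List.cons_append]
      refine List.isChain_cons_cons.2 ⟨?_, hb⟩
      intro h1
      obtain ⟨x1, x2⟩ := x
      obtain ⟨y1, y2⟩ := y
      simp only at h1 ⊢
      subst h1
      cases x2 <;> cases y2 <;> simp_all

/-- `|g ∧ h|` is the Gromov product `(g | h)` based at the identity of the Cayley tree. -/
theorem norm_inv_mul (g h : FreeGroup α) :
    (g⁻¹ * h).norm + 2 * wedgeFF g h = g.norm + h.norm := by
  obtain ⟨h1, h2, h3⟩ := (le_wedgeFF_iff _ g h).1 le_rfl
  set c := wedgeFF g h with hc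
  set a := g.toWord.drop c with ha
  set b := h.toWord.drop c with hb
  have hg : g = FreeGroup.mk (g.toWord.take c) * FreeGroup.mk a := by
    rw [FreeGroup.mul_mk, List.take_append_drop, FreeGroup.mk_toWord]
  have hh : h = FreeGroup.mk (g.toWord.take c) * FreeGroup.mk b := by
    rw [h3, FreeGroup.mul_mk, List.take_append_drop, FreeGroup.mk_toWord]
  have key : g⁻¹ * h = FreeGroup.mk (FreeGroup.invRev a ++ b) := by
    have : g⁻¹ * h = (FreeGroup.mk a)⁻¹ * FreeGroup.mk b := by
      conv_lhs => rw [hg, hh]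
      group
    rw [this, FreeGroup.inv_mk, FreeGroup.mul_mk]
  have h0 : commonPrefixLength a b = 0 := by
    by_contra hne
    obtain ⟨q1, q2, q3⟩ := (le_commonPrefixLength_iff 1 a b).1 (Nat.one_le_iff_ne_zero.2 hne)
    have : c + 1 ≤ wedgeFF g h := by
      rw [le_wedgeFF_iff]
      simp only [ha, hb, List.length_drop] at q1 q2
      refine ⟨by unfold FreeGroup.norm; omega, by unfold FreeGroup.norm; omega, ?_⟩
      rw [List.take_add, List.take_add, h3, ← ha, ← hb, q3]
    omega
  have hr := isReduced_invRev_append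
    (FreeGroup.isReduced_toWord.infix (List.drop_suffix c g.toWord).isInfix)
    (FreeGroup.isReduced_toWord.infix (List.drop_suffix c h.toWord).isInfix) h0
  rw [key, norm_mk_of_isReduced hr, List.length_append, FreeGroup.invRev_length,
    List.length_drop, List.length_drop]
  unfold FreeGroup.norm at *
  omega

/-- The prefix of length `min i |g|` of a finite reduced word. -/
def finPrefix (g : FreeGroup α) (i : ℕ) : FreeGroup α := FreeGroup.mk (g.toWord.take i)

theorem toWord_finPrefix (g : FreeGroup α) (i : ℕ) :
    (finPrefix g i).toWord = g.toWord.take i := by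
  rw [finPrefix, FreeGroup.toWord_mk]
  exact (FreeGroup.isReduced_toWord.infix (List.take_prefix i _).isInfix).reduce_eq

theorem norm_finPrefix {g : FreeGroup α} {i : ℕ} (h : i ≤ g.norm) : (finPrefix g i).norm = i := by
  rw [FreeGroup.norm, toWord_finPrefix, List.length_take]
  exact min_eq_left h

theorem le_wedgeFF_finPrefix {g : FreeGroup α} {i : ℕ} (h : i ≤ g.norm) :
    i ≤ wedgeFF (finPrefix g i) g := by
  rw [le_wedgeFF_iff]
  refine ⟨(norm_finPrefix h).ge, h, ?_⟩
  rw [toWord_finPrefix, List.take_take, min_self]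

theorem finPrefix_zero (g : FreeGroup α) : finPrefix g 0 = 1 := by
  simp [finPrefix, FreeGroup.one_eq_mk]

theorem finPrefix_norm (g : FreeGroup α) : finPrefix g g.norm = g := by
  simp [finPrefix, FreeGroup.norm, FreeGroup.mk_toWord]

/-! ### Prefixes of infinite reduced words -/

theorem isReduced_prefixList {γ : Type*} (W : InfWord γ) (i : ℕ) :
    FreeGroup.IsReduced (prefixList W i) := by
  rw [FreeGroup.IsReduced, List.isChain_iff_getElem]
  intro k hk h1
  simp only [prefixList, List.getElem_map, List.getElem_range] at h1 ⊢
  by_contra hne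
  refine W.2 k (Prod.ext h1.symm ?_)
  simp only [linv]
  revert hne
  cases (W.1 k).2 <;> cases (W.1 (k + 1)).2 <;> simp

theorem toWord_wordPrefix (W : InfWord α) (i : ℕ) : (wordPrefix W i).toWord = prefixList W i := by
  rw [wordPrefix, FreeGroup.toWord_mk, (isReduced_prefixList W i).reduce_eq]

theorem length_prefixList {γ : Type*} (W : InfWord γ) (i : ℕ) : (prefixList W i).length = i := by
  simp [prefixList]

theorem take_prefixList {γ : Type*} (W : InfWord γ) {i j : ℕ} (h : i ≤ j) :
    (prefixList W j).take i = prefixList W i := by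
  simp [prefixList, ← List.map_take, List.take_range, h]

@[simp]
theorem norm_wordPrefix (W : InfWord α) (i : ℕ) : (wordPrefix W i).norm = i := by
  rw [FreeGroup.norm, toWord_wordPrefix, length_prefixList]

theorem le_wedgeFF_wordPrefix (W : InfWord α) {n i j : ℕ} (hi : n ≤ i) (hj : n ≤ j) :
    n ≤ wedgeFF (wordPrefix W i) (wordPrefix W j) := by
  rw [le_wedgeFF_iff]
  simp [toWord_wordPrefix, take_prefixList W hi, take_prefixList W hj, hi, hj]

theorem wedgeFF_wordPrefix (W : InfWord α) {i j : ℕ} (h : i ≤ j) :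
    wedgeFF (wordPrefix W i) (wordPrefix W j) = i :=
  le_antisymm ((wedgeFF_le_left _ _).trans (norm_wordPrefix W i).le)
    (le_wedgeFF_wordPrefix W le_rfl h)

/-- Reduces statements about `|W ∧ g|` to statements about finite words. -/
theorem le_wedgeF_iff (W : InfWord α) {n i : ℕ} (hi : n ≤ i) (g : FreeGroup α) :
    n ≤ wedgeF W g ↔ n ≤ wedgeFF (wordPrefix W i) g := by
  rw [wedgeF, le_commonPrefixLength_iff, le_wedgeFF_iff, length_prefixList, norm_wordPrefix,
    toWord_wordPrefix, take_prefixList W hi]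
  constructor
  · rintro ⟨h1, -, h3⟩
    exact ⟨hi, h1, (take_prefixList W h1).symm.trans h3⟩
  · rintro ⟨-, h1, h3⟩
    exact ⟨h1, h1, (take_prefixList W h1).trans h3⟩

theorem wedgeF_le_norm (W : InfWord α) (g : FreeGroup α) : wedgeF W g ≤ g.norm :=
  ((le_commonPrefixLength_iff _ _ _).1 le_rfl).2.1

theorem le_wedgeF_wordPrefix (W : InfWord α) {n i : ℕ} (h : n ≤ i) :
    n ≤ wedgeF W (wordPrefix W i) :=
  (le_wedgeF_iff W le_rfl _).2 (le_wedgeFF_wordPrefix W le_rfl h)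

theorem wedgeF_ultra {W : InfWord α} {n : ℕ} {g h : FreeGroup α} (h1 : n ≤ wedgeF W g)
    (h2 : n ≤ wedgeFF g h) : n ≤ wedgeF W h :=
  (le_wedgeF_iff W le_rfl _).2 (wedgeFF_ultra ((le_wedgeF_iff W le_rfl _).1 h1) h2)

theorem wedgeFF_of_wedgeF {W : InfWord α} {n : ℕ} {g h : FreeGroup α} (h1 : n ≤ wedgeF W g)
    (h2 : n ≤ wedgeF W h) : n ≤ wedgeFF g h :=
  wedgeFF_ultra (wedgeFF_comm _ g ▸ (le_wedgeF_iff W le_rfl _).1 h1)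
    ((le_wedgeF_iff W le_rfl _).1 h2)

/-- `|W ∧ ·|` decreases by at most the distance between the two group elements. -/
theorem wedgeF_lipschitz (W : InfWord α) (g h : FreeGroup α) :
    wedgeF W g ≤ wedgeF W h + (g⁻¹ * h).norm := by
  have h1 := norm_inv_mul g h
  have h2 := wedgeFF_le_left g h
  have h3 := wedgeFF_le_right g h
  have h4 := wedgeF_le_norm W g
  have h5 : wedgeF W g - (g⁻¹ * h).norm ≤ wedgeF W h :=
    wedgeF_ultra (g := g) (Nat.sub_le _ _) (by omega)
  omega

/-! ### Neighbourhoods of infinite words and boundary extensions -/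

section Boundary

variable {β : Type*} [DecidableEq β]

/-- The trace on the free group of the neighbourhood filter of the boundary point `W`: a set is a
neighbourhood if it contains every `g` with `|W ∧ g|` large enough. -/
def bdryNhds (W : InfWord α) : Filter (FreeGroup α) := comap (wedgeF W) atTop

theorem tendsto_bdryNhds {ι : Type*} {f : ι → FreeGroup α} {l : Filter ι} {W : InfWord α} :
    Tendsto f l (bdryNhds W) ↔ ∀ R, ∀ᶠ x in l, R ≤ wedgeF W (f x) := by
  rw [bdryNhds, tendsto_comap_iff, tendsto_atTop]
  rfl

theorem eventually_bdryNhds (W : InfWord α) (R : ℕ) : ∀ᶠ g in bdryNhds W, R ≤ wedgeF W g :=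
  tendsto_bdryNhds.1 tendsto_id R

theorem convergesTo_iff {f : ℕ → FreeGroup α} {W : InfWord α} :
    ConvergesTo f W ↔ Tendsto f atTop (bdryNhds W) := by
  rw [bdryNhds, tendsto_comap_iff]
  rfl

theorem tendsto_wordPrefix (W : InfWord α) : Tendsto (wordPrefix W) atTop (bdryNhds W) :=
  tendsto_bdryNhds.2 fun R => (eventually_ge_atTop R).mono fun _ h => le_wedgeF_wordPrefix W h

/-- Limits in the boundary are unique. -/
theorem bdry_unique {ι : Type*} {f : ι → FreeGroup α} {l : Filter ι} [l.NeBot]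
    {W V : InfWord α} (hW : Tendsto f l (bdryNhds W)) (hV : Tendsto f l (bdryNhds V)) :
    W = V := by
  refine Subtype.ext (funext fun n => ?_)
  obtain ⟨x, h1, h2⟩ :=
    ((tendsto_bdryNhds.1 hW (n + 1)).and (tendsto_bdryNhds.1 hV (n + 1))).exists
  rw [le_wedgeF_iff _ le_rfl] at h1 h2
  rw [wedgeFF_comm] at h2
  have h3 := ((le_wedgeFF_iff _ _ _).1 (wedgeFF_ultra h1 h2)).2.2
  rw [toWord_wordPrefix, toWord_wordPrefix, take_prefixList _ le_rfl,
    take_prefixList _ le_rfl] at h3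
  have h4 := congrArg (fun L => L[n]?) h3
  simpa [prefixList] using h4

/-- Uniform continuity at infinity: words with a long common prefix have images with a long common
prefix. -/
def Extends (f : FreeGroup α → FreeGroup β) : Prop :=
  ∀ R, ∃ M, ∀ X Y, M ≤ wedgeFF X Y → R ≤ wedgeFF (f X) (f Y)

/-- A map that is uniformly continuous at infinity extends to infinite words. -/
theorem Extends.exists_limit {f : FreeGroup α → FreeGroup β} (hf : Extends f) (W : InfWord α) :
    ∃ V, Tendsto f (bdryNhds W) (bdryNhds V) := by
  choose M hM using hf
  set p : ℕ → FreeGroup β := fun R => f (wordPrefix W (M R)) with hp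
  have hlen : ∀ R, R ≤ (p R).toWord.length := fun R =>
    (hM R _ _ (le_wedgeFF_wordPrefix W le_rfl le_rfl)).trans (wedgeFF_le_left _ _)
  have hpp : ∀ R S, R ≤ S → R ≤ wedgeFF (p R) (p S) := fun R S hRS => by
    have h1 := hM R _ _ (le_wedgeFF_wordPrefix W le_rfl (le_max_left (M R) (M S)))
    have h2 := hM S _ _ (le_wedgeFF_wordPrefix W le_rfl (le_max_right (M R) (M S)))
    rw [wedgeFF_comm] at h2
    exact wedgeFF_ultra h1 (hRS.trans h2)
  -- The `n`-th letter of the limit is read off from any `p R` with `n < R`.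
  let w : ℕ → Letter β := fun n => (p (n + 1)).toWord[n]'(hlen (n + 1))
  have hw : ∀ n R (h : n < R), w n = (p R).toWord[n]'(h.trans_le (hlen R)) := fun n R h => by
    have h1 := ((le_wedgeFF_iff _ _ _).1 (hpp (n + 1) R h)).2.2
    have h2 := congrArg (fun L => L[n]?) h1
    have h3 := hlen (n + 1)
    have h4 := hlen R
    simp only [List.getElem?_take, Nat.lt_succ_self, if_true] at h2
    rw [List.getElem?_eq_getElem (by omega), List.getElem?_eq_getElem (by omega)] at h2
    exact Option.some_injective _ h2
  let V : InfWord β := ⟨w, fun n h => by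
    have h1 := List.isChain_iff_getElem.1 (FreeGroup.isReduced_toWord (x := p (n + 2))) n
      ((Nat.lt_succ_self _).trans_le (hlen (n + 2)))
    rw [← hw n (n + 2) (by omega), ← hw (n + 1) (n + 2) (by omega), h] at h1
    simp [linv] at h1⟩
  have hV : ∀ R, R ≤ wedgeF V (p R) := fun R => by
    rw [le_wedgeF_iff V le_rfl, le_wedgeFF_iff, norm_wordPrefix, toWord_wordPrefix]
    refine ⟨le_rfl, hlen R, ?_⟩
    rw [take_prefixList V le_rfl]
    refine List.ext_getElem ?_ fun k h1 h2 => ?_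
    · rw [length_prefixList, List.length_take, min_eq_left (hlen R)]
    · rw [length_prefixList] at h1
      simp only [prefixList, List.getElem_map, List.getElem_range, List.getElem_take]
      exact hw k R h1
  refine ⟨V, tendsto_bdryNhds.2 fun R => ?_⟩
  filter_upwards [eventually_bdryNhds W (M R)] with X hX
  exact wedgeF_ultra (hV R) (hM R _ _ ((le_wedgeF_iff W le_rfl X).1 hX))

theorem Extends.tendsto {f : FreeGroup α → FreeGroup β} (hf : Extends f) {W : InfWord α}
    {V : InfWord β} (h : Tendsto (fun i => f (wordPrefix W i)) atTop (bdryNhds V)) :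
    Tendsto f (bdryNhds W) (bdryNhds V) := by
  obtain ⟨V', hV'⟩ := hf.exists_limit W
  rwa [bdry_unique h (hV'.comp (tendsto_wordPrefix W))]

theorem extends_mul_left (U : FreeGroup α) : Extends fun X => U * X := by
  refine fun R => ⟨R + U.norm, fun X Y h => ?_⟩
  have h1 := norm_inv_mul X Y
  have h2 := norm_inv_mul (U * X) (U * Y)
  have h3 : ∀ Z : FreeGroup α, Z.norm ≤ U.norm + (U * Z).norm := fun Z => by
    simpa using FreeGroup.norm_mul_le U⁻¹ (U * Z)
  have h4 := h3 X
  have h5 := h3 Y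
  rw [show (U * X)⁻¹ * (U * Y) = X⁻¹ * Y by group] at h2
  change R ≤ wedgeFF (U * X) (U * Y)
  omega

/-! ### Bounded cancellation for injective homomorphisms -/

theorem exists_lipschitz [Finite α] (u : FreeGroup α →* FreeGroup β) :
    ∃ L, ∀ g, (u g).norm ≤ L * g.norm := by
  obtain ⟨L, hL⟩ := (Set.finite_range fun a => (u (FreeGroup.of a)).norm).bddAbove
  have hword : ∀ w : List (Letter α), (u (FreeGroup.mk w)).norm ≤ L * w.length := by
    intro w
    induction w with
    | nil => simp [← FreeGroup.one_eq_mk]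
    | cons x w ih =>
      have h1 : FreeGroup.mk (x :: w) = FreeGroup.mk [x] * FreeGroup.mk w := by
        rw [FreeGroup.mul_mk, List.singleton_append]
      have h2 : (u (FreeGroup.mk [x])).norm ≤ L := by
        obtain ⟨a, b⟩ := x
        have h3 := hL (Set.mem_range_self a)
        cases b with
        | true => exact h3
        | false =>
          have : (FreeGroup.mk [(a, false)] : FreeGroup α) = (FreeGroup.of a)⁻¹ := rfl
          rwa [this, map_inv, FreeGroup.norm_inv_eq]
      rw [h1, map_mul, List.length_cons, mul_add, mul_one]
      have := FreeGroup.norm_mul_le (u (FreeGroup.mk [x])) (u (FreeGroup.mk w))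
      omega
  exact ⟨L, fun g => by simpa [FreeGroup.mk_toWord, FreeGroup.norm] using hword g.toWord⟩

/-- An injective homomorphism is proper, because balls in a finitely generated free group are
finite. -/
theorem exists_proper [Finite α] [Finite β] {u : FreeGroup α →* FreeGroup β}
    (hu : Function.Injective u) (R : ℕ) : ∃ N, ∀ g, (u g).norm ≤ R → g.norm ≤ N := by
  have h1 : {h : FreeGroup β | h.norm ≤ R}.Finite :=
    (List.finite_length_le (Letter β) R).preimage FreeGroup.toWord_injective.injOn
  obtain ⟨N, hN⟩ := ((h1.preimage hu.injOn).image FreeGroup.norm).bddAbove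
  exact ⟨N, fun g hg => hN (Set.mem_image_of_mem _ hg)⟩

/-- A path from `1` with steps of length at most `L` that ends beyond the vertex `s` of the Cayley
tree passes within `L` of `s`: the step on which it first enters the branch below `s` crosses
`s`. -/
theorem exists_near {x : ℕ → FreeGroup β} {L n : ℕ} {s : FreeGroup β} (h0 : x 0 = 1)
    (hL : ∀ i, ((x i)⁻¹ * x (i + 1)).norm ≤ L) (hn : s.norm ≤ wedgeFF (x n) s) :
    ∃ i ≤ n, ((x i)⁻¹ * s).norm ≤ L := by
  classical
  have hex : ∃ i, s.norm ≤ wedgeFF (x i) s := ⟨n, hn⟩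
  have hs := Nat.find_spec hex
  refine ⟨Nat.find hex, Nat.find_min' hex hn, ?_⟩
  have h1 := norm_inv_mul (x (Nat.find hex)) s
  rcases hi : Nat.find hex with _ | i
  · rw [hi] at hs h1
    have := wedgeFF_le_left (x 0) s
    have h2 : (x 0).norm = 0 := by rw [h0, FreeGroup.norm_one]
    omega
  · have hmin := Nat.find_min hex (m := i) (by omega)
    rw [hi] at hs h1
    have h2 := norm_inv_mul (x i) (x (i + 1))
    have h3 := hL i
    have h4 : wedgeFF (x i) (x (i + 1)) < s.norm := by
      by_contra hlt
      exact hmin (wedgeFF_ultra (not_lt.1 hlt) hs)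
    have h5 := wedgeFF_le_left (x i) (x (i + 1))
    omega

theorem norm_inv_mul_step (W : InfWord α) (i : ℕ) :
    ((wordPrefix W i)⁻¹ * wordPrefix W (i + 1)).norm = 1 := by
  have h1 := norm_inv_mul (wordPrefix W i) (wordPrefix W (i + 1))
  rw [wedgeFF_wordPrefix W (Nat.le_succ i), norm_wordPrefix, norm_wordPrefix] at h1
  omega

theorem norm_inv_mul_finPrefix_step (g : FreeGroup α) (i : ℕ) :
    ((finPrefix g i)⁻¹ * finPrefix g (i + 1)).norm ≤ 1 := by
  rcases Nat.lt_or_ge i g.norm with h | h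
  · have h1 := norm_inv_mul (finPrefix g i) (finPrefix g (i + 1))
    have h2 := le_wedgeFF_finPrefix h.le
    have h3 := le_wedgeFF_finPrefix (Nat.succ_le_of_lt h)
    rw [wedgeFF_comm] at h3
    have h4 := wedgeFF_ultra h2 ((Nat.le_succ i).trans h3)
    rw [Nat.succ_eq_add_one] at h4
    rw [norm_finPrefix h.le, norm_finPrefix (Nat.succ_le_of_lt h)] at h1
    omega
  · have : finPrefix g i = finPrefix g (i + 1) := by
      rw [finPrefix, finPrefix, List.take_of_length_le h,
        List.take_of_length_le (h.trans (Nat.le_succ i))]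
    simp [this]

/-- A prefix `s` of `u(B)` is within the Lipschitz constant of the image of a prefix of `B`. -/
theorem exists_near_image {u : FreeGroup α →* FreeGroup β} {L : ℕ}
    (hL : ∀ g, (u g).norm ≤ L * g.norm) {B : FreeGroup α} {s : FreeGroup β}
    (hs : s.norm ≤ wedgeFF (u B) s) :
    ∃ i ≤ B.norm, ((u (finPrefix B i))⁻¹ * s).norm ≤ L := by
  refine exists_near (x := fun i => u (finPrefix B i)) (by simp [finPrefix_zero]) (fun i => ?_)
    (by simpa [finPrefix_norm] using hs)
  rw [← map_inv, ← map_mul]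
  exact (hL _).trans ((Nat.mul_le_mul_left L (norm_inv_mul_finPrefix_step B i)).trans (mul_one L).le)

/-- Bounded cancellation at a vertex. If `s = u(A) ∧ u(B)` is long, it is close to `u(A')` and
`u(B')` for prefixes `A'`, `B'` of `A`, `B`; then `u(A'⁻¹B')` is short, so by properness `A'⁻¹B'`
is short, and as `A`, `B` have no common prefix, `B'` is short, whence `s` is short. -/
theorem exists_bounded_wedge [Finite α] [Finite β] {u : FreeGroup α →* FreeGroup β}
    (hu : Function.Injective u) :
    ∃ C, ∀ A B, wedgeFF A B = 0 → wedgeFF (u A) (u B) ≤ C := by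
  obtain ⟨L, hL⟩ := exists_lipschitz u
  obtain ⟨N, hN⟩ := exists_proper hu (2 * L)
  refine ⟨L * N + L, fun A B hAB => ?_⟩
  set s := finPrefix (u A) (wedgeFF (u A) (u B)) with hs
  have hsn : s.norm = wedgeFF (u A) (u B) := norm_finPrefix (wedgeFF_le_left _ _)
  have hsA : s.norm ≤ wedgeFF (u A) s := by
    rw [wedgeFF_comm, hsn]
    exact le_wedgeFF_finPrefix (wedgeFF_le_left _ _)
  have hsB : s.norm ≤ wedgeFF (u B) s :=
    wedgeFF_ultra (by rw [wedgeFF_comm, hsn]) hsA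
  obtain ⟨j, hj, hjs⟩ := exists_near_image hL hsA
  obtain ⟨i, hi, his⟩ := exists_near_image hL hsB
  have h1 : wedgeFF (finPrefix A j) (finPrefix B i) = 0 := by
    by_contra hne
    have h2 := Nat.one_le_iff_ne_zero.2 hne
    have h3 := h2.trans (wedgeFF_le_left _ _)
    have h4 := h2.trans (wedgeFF_le_right _ _)
    rw [norm_finPrefix hj] at h3
    rw [norm_finPrefix hi] at h4
    have h5 := h3.trans (le_wedgeFF_finPrefix hj)
    have h6 := h4.trans (le_wedgeFF_finPrefix hi)
    rw [wedgeFF_comm] at h5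
    have := wedgeFF_ultra (wedgeFF_ultra h5 h2) h6
    omega
  have h2 := norm_inv_mul (finPrefix A j) (finPrefix B i)
  rw [h1, norm_finPrefix hj, norm_finPrefix hi] at h2
  have h3 : (u ((finPrefix A j)⁻¹ * finPrefix B i)).norm ≤ 2 * L := by
    have h4 := FreeGroup.norm_mul_le ((u (finPrefix A j))⁻¹ * s) ((u (finPrefix B i))⁻¹ * s)⁻¹
    rw [FreeGroup.norm_inv_eq] at h4
    rw [show (u (finPrefix A j))⁻¹ * s * ((u (finPrefix B i))⁻¹ * s)⁻¹
      = u ((finPrefix A j)⁻¹ * finPrefix B i) by simp [mul_assoc]] at h4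
    omega
  have h4 := hN _ h3
  have h5 := FreeGroup.norm_mul_le (u (finPrefix B i)) ((u (finPrefix B i))⁻¹ * s)
  rw [mul_inv_cancel_left] at h5
  have h6 := hL (finPrefix B i)
  rw [norm_finPrefix hi] at h6
  have h7 : L * i ≤ L * N := Nat.mul_le_mul_left L (by omega)
  omega

/-- Bounded cancellation: when `P` is a prefix of `X`, all but a bounded final part of `u(P)` is a
prefix of `u(X)`. -/
theorem exists_bounded_cancellation [Finite α] [Finite β] {u : FreeGroup α →* FreeGroup β}
    (hu : Function.Injective u) :
    ∃ C, ∀ P X, P.norm ≤ wedgeFF P X → (u P).norm ≤ wedgeFF (u P) (u X) + C := by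
  obtain ⟨C, hC⟩ := exists_bounded_wedge hu
  refine ⟨C, fun P X h => ?_⟩
  have h0 : wedgeFF P⁻¹ (P⁻¹ * X) = 0 := by
    have h1 := norm_inv_mul P X
    have h2 := norm_inv_mul P⁻¹ (P⁻¹ * X)
    have h3 := wedgeFF_le_left P X
    rw [FreeGroup.norm_inv_eq, inv_inv, mul_inv_cancel_left] at h2
    omega
  have h1 := hC _ _ h0
  have h2 := norm_inv_mul (u P) (u X)
  have h3 := norm_inv_mul (u P⁻¹) (u (P⁻¹ * X))
  rw [map_mul, map_inv, FreeGroup.norm_inv_eq, inv_inv, mul_inv_cancel_left] at h3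
  rw [map_mul, map_inv] at h1
  omega

theorem extends_of_injective [Finite α] [Finite β] {u : FreeGroup α →* FreeGroup β}
    (hu : Function.Injective u) : Extends u := by
  obtain ⟨C, hC⟩ := exists_bounded_cancellation hu
  intro R
  obtain ⟨N, hN⟩ := exists_proper hu (R + C)
  refine ⟨N + 1, fun X Y h => ?_⟩
  set P := finPrefix X (wedgeFF X Y) with hP
  have hPn : P.norm = wedgeFF X Y := norm_finPrefix (wedgeFF_le_left _ _)
  have hPX : P.norm ≤ wedgeFF P X := by
    rw [hPn]
    exact le_wedgeFF_finPrefix (wedgeFF_le_left _ _)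
  have h1 := hC P X hPX
  have h2 := hC P Y (wedgeFF_ultra hPX hPn.le)
  have h3 : R + C < (u P).norm := by
    by_contra hlt
    have := hN P (not_lt.1 hlt)
    omega
  rw [wedgeFF_comm] at h1
  exact wedgeFF_ultra (h := u P) (by omega) (by omega)

/-! ### Transport of attracting fixed words -/

theorem isFixedInfWord_iff {φ : FreeGroup α →* FreeGroup α} {W : InfWord α} :
    IsFixedInfWord φ W ↔ Tendsto (fun i => φ (wordPrefix W i)) atTop (bdryNhds W) := by
  rw [bdryNhds, tendsto_comap_iff]
  rfl

/-- A finite prefix of `u(W)` is within the Lipschitz constant of the image of a prefix of `W`. -/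
theorem exists_near_boundary {u : FreeGroup α →* FreeGroup β} {L : ℕ}
    (hL : ∀ g, (u g).norm ≤ L * g.norm) {W : InfWord α} {V : InfWord β}
    (h : Tendsto u (bdryNhds W) (bdryNhds V)) (j : ℕ) :
    ∃ i, ((u (wordPrefix W i))⁻¹ * wordPrefix V j).norm ≤ L := by
  obtain ⟨n, hn⟩ := (tendsto_bdryNhds.1 (h.comp (tendsto_wordPrefix W)) j).exists
  obtain ⟨i, -, hi⟩ := exists_near (x := fun i => u (wordPrefix W i)) (L := L) (n := n)
    (s := wordPrefix V j) (by simp [wordPrefix, prefixList, ← FreeGroup.one_eq_mk])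
    (fun i => by
      rw [← map_inv, ← map_mul]
      exact (hL _).trans (by rw [norm_inv_mul_step, mul_one]))
    (by
      rw [norm_wordPrefix, wedgeFF_comm]
      exact (le_wedgeF_iff V le_rfl _).1 hn)
  exact ⟨i, hi⟩

/-- Bounded cancellation along an infinite word: all but a bounded final part of `u(W_k)` is a
prefix of `u(W)`. -/
theorem norm_le_wedgeF_image {u : FreeGroup α →* FreeGroup β} {C : ℕ}
    (hC : ∀ P X, P.norm ≤ wedgeFF P X → (u P).norm ≤ wedgeFF (u P) (u X) + C)
    {W : InfWord α} {V : InfWord β} (h : Tendsto u (bdryNhds W) (bdryNhds V)) (k : ℕ) :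
    (u (wordPrefix W k)).norm ≤ wedgeF V (u (wordPrefix W k)) + C := by
  obtain ⟨K, hK, hkK⟩ := ((tendsto_bdryNhds.1 (h.comp (tendsto_wordPrefix W))
    (u (wordPrefix W k)).norm).and (eventually_ge_atTop k)).exists
  have h1 := hC (wordPrefix W k) (wordPrefix W K)
    (by rw [norm_wordPrefix]; exact le_wedgeFF_wordPrefix W le_rfl hkK)
  have h2 := wedgeFF_le_left (u (wordPrefix W k)) (u (wordPrefix W K))
  have h3 : wedgeFF (u (wordPrefix W k)) (u (wordPrefix W K)) ≤ wedgeF V (u (wordPrefix W k)) :=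
    wedgeF_ultra (h2.trans hK) (wedgeFF_comm _ _).le
  omega

/-- If `W` is fixed by `v ∘ u` and `V = u(W)`, then `v(V) = W`, in the sense that `v` extends
continuously by `V ↦ W`. -/
theorem tendsto_of_isFixedInfWord [Finite α] [Finite β] {u : FreeGroup α →* FreeGroup β}
    {v : FreeGroup β →* FreeGroup α} (hv : Function.Injective v) {W : InfWord α} {V : InfWord β}
    (hWV : Tendsto u (bdryNhds W) (bdryNhds V)) (hW : IsFixedInfWord (v.comp u) W) :
    Tendsto v (bdryNhds V) (bdryNhds W) :=
  (extends_of_injective hv).exists_limit V |>.elim fun X hX => by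
    have h1 := hX.comp (hWV.comp (tendsto_wordPrefix W))
    rwa [← bdry_unique h1 (isFixedInfWord_iff.1 hW)]

/-- If `W` is an attracting fixed word of `v ∘ u`, then `u(W)` is one of `u ∘ v`. A prefix `V_j` of
`V = u(W)` is near some `u(W_i)`, so `uv(V_j)` is near `u(vu(W_i))`, which begins with most of
`u(W_k)` where `k = |W ∧ vu(W_i)|`. As `k - i → ∞`, properness and bounded cancellation make
`|u(W_k)| - |u(W_i)|`, and hence `|V ∧ uv(V_j)| - j`, tend to infinity. -/
theorem isAttractingFixedWord_image [Finite α] [Finite β] {u : FreeGroup α →* FreeGroup β}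
    {v : FreeGroup β →* FreeGroup α} (hu : Function.Injective u) (hv : Function.Injective v)
    {W : InfWord α} {V : InfWord β} (hWV : Tendsto u (bdryNhds W) (bdryNhds V))
    (hW : IsAttractingFixedWord (v.comp u) W) : IsAttractingFixedWord (u.comp v) V := by
  have hVW := tendsto_of_isFixedInfWord hv hWV hW.1
  refine ⟨isFixedInfWord_iff.2 (hWV.comp (hVW.comp (tendsto_wordPrefix V))), ?_⟩
  obtain ⟨L, hL⟩ := exists_lipschitz u
  obtain ⟨L', hL'⟩ := exists_lipschitz (u.comp v)
  obtain ⟨C, hC⟩ := exists_bounded_cancellation hu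
  refine tendsto_atTop.2 fun R => ?_
  obtain ⟨N, hN⟩ := exists_proper hu (R.toNat + L + 3 * C + L' * L)
  obtain ⟨I, hI⟩ := eventually_atTop.1 (tendsto_atTop.1 hW.2 ((N : ℤ) + 1))
  refine eventually_atTop.2 ⟨L * I + L + 1, fun j hj => ?_⟩
  obtain ⟨i, hi⟩ := exists_near_boundary hL hWV j
  -- `j ≤ |u(W_i)| + L ≤ L * i + L`, which forces `i` to be large
  have hj1 : j ≤ (u (wordPrefix W i)).norm + L := by
    have h1 := FreeGroup.norm_mul_le (u (wordPrefix W i))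
      ((u (wordPrefix W i))⁻¹ * wordPrefix V j)
    rw [mul_inv_cancel_left, norm_wordPrefix] at h1
    omega
  have hiI : I ≤ i := by
    by_contra hlt
    have h1 := hL (wordPrefix W i)
    rw [norm_wordPrefix] at h1
    have h2 : L * i ≤ L * I := Nat.mul_le_mul_left L (by omega)
    omega
  have hk := hI i hiI
  simp only [MonoidHom.comp_apply] at hk ⊢
  set Y := v (u (wordPrefix W i)) with hY
  set k := wedgeF W Y with hkdef
  have hik : i ≤ k := by omega
  have h1 := norm_le_wedgeF_image hC hWV k
  have h2 := hC (wordPrefix W k) Y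
    (by rw [norm_wordPrefix]; exact (le_wedgeF_iff W le_rfl Y).1 le_rfl)
  have h3 : (u (wordPrefix W k)).norm - C ≤ wedgeF V (u Y) :=
    wedgeF_ultra (g := u (wordPrefix W k)) (by omega) (by omega)
  have h4 := wedgeF_lipschitz V (u Y) (u (v (wordPrefix V j)))
  have h5 : ((u Y)⁻¹ * u (v (wordPrefix V j))).norm ≤ L' * L := by
    have h6 := hL' ((u (wordPrefix W i))⁻¹ * wordPrefix V j)
    rw [map_mul, map_inv] at h6
    exact h6.trans (Nat.mul_le_mul_left L' hi)
  have h6 := hC (wordPrefix W i) (wordPrefix W k)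
    (by rw [norm_wordPrefix]; exact le_wedgeFF_wordPrefix W le_rfl hik)
  have h7 := norm_inv_mul (u (wordPrefix W i)) (u (wordPrefix W k))
  have h8 : R.toNat + L + 3 * C + L' * L
      < ((u (wordPrefix W i))⁻¹ * u (wordPrefix W k)).norm := by
    by_contra hlt
    rw [← map_inv, ← map_mul, not_lt] at hlt
    have h9 := hN _ hlt
    have h10 := norm_inv_mul (wordPrefix W i) (wordPrefix W k)
    rw [wedgeFF_wordPrefix W hik, norm_wordPrefix, norm_wordPrefix] at h10
    omega
  omega

/-- `u` carries the relation `W' = U W` to `u(W') = u(U) u(W)`. -/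
theorem equivFixedWords_image [Finite α] [Finite β] {u : FreeGroup α →* FreeGroup β}
    {v : FreeGroup β →* FreeGroup α} {W W' : InfWord α} {V V' : InfWord β}
    (hWV : Tendsto u (bdryNhds W) (bdryNhds V)) (hWV' : Tendsto u (bdryNhds W') (bdryNhds V'))
    (h : EquivFixedWords (v.comp u) W W') : EquivFixedWords (u.comp v) V V' := by
  obtain ⟨U, hU, hlim⟩ := h
  refine ⟨u U, congrArg u hU, ?_⟩
  obtain ⟨V'', hV''⟩ := (extends_mul_left (u U)).exists_limit V
  have h1 : Tendsto (fun i => u U * u (wordPrefix W i)) atTop (bdryNhds V'') :=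
    hV''.comp (hWV.comp (tendsto_wordPrefix W))
  have h2 : Tendsto (fun i => u U * u (wordPrefix W i)) atTop (bdryNhds V') := by
    simpa [Function.comp_def] using hWV'.comp (convergesTo_iff.1 hlim)
  rw [convergesTo_iff, ← bdry_unique h1 h2]
  exact hV''.comp (tendsto_wordPrefix V)

/-- The map induced by `u` from attracting fixed words of `v ∘ u` to those of `u ∘ v`. -/
noncomputable def bdryMap [Finite α] [Finite β] {u : FreeGroup α →* FreeGroup β}
    {v : FreeGroup β →* FreeGroup α} (hu : Function.Injective u) (hv : Function.Injective v)
    (W : {W : InfWord α // IsAttractingFixedWord (v.comp u) W}) :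
    {V : InfWord β // IsAttractingFixedWord (u.comp v) V} :=
  ⟨((extends_of_injective hu).exists_limit W.1).choose,
    isAttractingFixedWord_image hu hv ((extends_of_injective hu).exists_limit W.1).choose_spec W.2⟩

theorem bdryMap_spec [Finite α] [Finite β] {u : FreeGroup α →* FreeGroup β}
    {v : FreeGroup β →* FreeGroup α} (hu : Function.Injective u) (hv : Function.Injective v)
    (W : {W : InfWord α // IsAttractingFixedWord (v.comp u) W}) :
    Tendsto u (bdryNhds W.1) (bdryNhds (bdryMap hu hv W).1) :=
  ((extends_of_injective hu).exists_limit W.1).choose_spec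

theorem bdryMap_bdryMap [Finite α] [Finite β] {u : FreeGroup α →* FreeGroup β}
    {v : FreeGroup β →* FreeGroup α} (hu : Function.Injective u) (hv : Function.Injective v)
    (W : {W : InfWord α // IsAttractingFixedWord (v.comp u) W}) :
    bdryMap hv hu (bdryMap hu hv W) = W := by
  have h1 := (bdryMap_spec hv hu (bdryMap hu hv W)).comp
    ((bdryMap_spec hu hv W).comp (tendsto_wordPrefix W.1))
  exact Subtype.ext (bdry_unique h1 (isFixedInfWord_iff.1 W.2.1))

theorem aCard_comp_comm [Finite α] [Finite β] {u : FreeGroup α →* FreeGroup β}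
    {v : FreeGroup β →* FreeGroup α} (hu : Function.Injective u) (hv : Function.Injective v) :
    aCard (v.comp u) = aCard (u.comp v) := by
  refine ENat.card_congr (Quot.congr
    ⟨bdryMap hu hv, bdryMap hv hu, bdryMap_bdryMap hu hv, bdryMap_bdryMap hv hu⟩
    fun W W' => ⟨equivFixedWords_image (bdryMap_spec hu hv W) (bdryMap_spec hu hv W'), fun h => ?_⟩)
  have h1 := equivFixedWords_image (bdryMap_spec hv hu (bdryMap hu hv W))
    (bdryMap_spec hv hu (bdryMap hu hv W')) h
  rwa [bdryMap_bdryMap, bdryMap_bdryMap] at h1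

theorem map_fixedSubgroup {G H : Type*} [Group G] [Group H] (u : G →* H) (v : H →* G) :
    Subgroup.map u (fixedSubgroup (v.comp u)) = fixedSubgroup (u.comp v) := by
  ext h
  constructor
  · rintro ⟨g, hg, rfl⟩
    exact congrArg u hg
  · exact fun hh => ⟨v h, congrArg v hh, hh⟩

end Boundary

/-- Fact 3, Commutation invariance: `u` restricts to an isomorphism
`fix(v ∘ u) ≅ fix(u ∘ v)` and `a(v ∘ u) = a(u ∘ v)`. -/
theorem stmt13 {m n : ℕ} (u : FreeGroup (Fin m) →* FreeGroup (Fin n))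
    (v : FreeGroup (Fin n) →* FreeGroup (Fin m))
    (hu : Function.Injective u) (hv : Function.Injective v) :
    Subgroup.map u (fixedSubgroup (v.comp u)) = fixedSubgroup (u.comp v) ∧
    aCard (v.comp u) = aCard (u.comp v) := by
  exact ⟨map_fixedSubgroup u v, aCard_comp_comm hu hv⟩

end ZZFix
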